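/- There exist a function f : ℕ → ℕ and a constant c such that the following holds. Let (J,M) be an instance of P||C_max with n jobs, m machines, and processing times p_j ∈ {1,…,T} for some T ∈ ℕ, and for p ∈ {1,…,T} let n_p be the number of jobs with p_j = p. Let P be the convex hull of all y ∈ {0,1}^{M×𝒞_*(T)} satisfying ∑_{C∈𝒞_*(T)} y_{iC} = 1 for every machine i ∈ M and ∑_{i∈M} ∑_{C∈𝒞_*(T)} m(p,C)·y_{iC} = n_p for every p ∈ {1,…,T}. Then xc(P) ≤ f(T)·(n+m+2)^c, i.e., the integer hull of the pattern-configuration program has extension complexity O(f(T)·poly(n,m)). -/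

import Mathlib

open Finset

noncomputable section

/-- An extended formulation of size `k` (number of inequalities) for `P ⊆ ℝ^ι`. -/
def IsEF {ι : Type} [Fintype ι] (P : Set (ι → ℝ)) (k : ℕ) : Prop :=
  ∃ (e l : ℕ) (A : Matrix (Fin k) (Fin e) ℝ) (b : Fin k → ℝ)
    (C : Matrix (Fin l) (Fin e) ℝ) (d : Fin l → ℝ)
    (π : (Fin e → ℝ) →ᵃ[ℝ] (ι → ℝ)),
    π '' {y | (∀ r, A.mulVec y r ≤ b r) ∧ (∀ r, C.mulVec y r = d r)} = P

/-- The extension complexity of `P`. -/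
noncomputable def xc {ι : Type} [Fintype ι] (P : Set (ι → ℝ)) : ℕ :=
  sInf {k | IsEF P k}

/-- A pattern (abstract configuration) for target makespan `T`: the multiplicity
`c q : ℕ` (bounded by `T`) of each processing time `q+1 ∈ {1, …, T}`, with total size
`∑ (q+1)·(c q) ≤ T`. -/
abbrev Pattern (T : ℕ) :=
  {c : Fin T → Fin (T + 1) // ∑ q : Fin T, ((q : ℕ) + 1) * (c q : ℕ) ≤ T}

/-- The integer hull of the pattern-configuration program: the convex hull of all 0/1
vectors `y` assigning exactly one pattern to each machine such that, for each processing
time `p`, the patterns provide exactly `n_p` slots of size `p`. -/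
def Ppat (m T : ℕ) (np : Fin T → ℕ) : Set (Fin m × Pattern T → ℝ) :=
  convexHull ℝ {y | (∀ q, y q = 0 ∨ y q = 1) ∧
    (∀ i : Fin m, ∑ C : Pattern T, y (i, C) = 1) ∧
    (∀ q : Fin T, ∑ i : Fin m, ∑ C : Pattern T,
      ((C.1 q : ℕ) : ℝ) * y (i, C) = (np q : ℝ))}

/-! Write `u(v)` for the vector counting how often an assignment `v` of patterns to machines uses
each pattern, so that the program asks for `A u(v) = b`. Fix a modulus `K`, depending only on `T`,
that clears the denominators of the finitely many integer systems whose columns are `A d`, `d`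
ranging over a set of small vectors. The assignments with prescribed `u(v)` modulo `K` are the
paths of a layered network whose nodes are the residues, so their hull has a flow formulation of
size linear in `m`. Intersecting it with the demand equations yields vertices with integral column
sums: on the smallest face of the hull containing such a vertex, `K` machines may exchange
patterns, hence usage vectors of the face differ by integer combinations of vectors `K d` with `d`
small; `A` is injective on the span of these directions, and `K` kills the denominators in solving
the demand equations. By Birkhoff's theorem a fractional assignment with integral column sums is a
convex combination of assignments, so each slice lies in the hull of the feasible assignments.
That hull is thus the convex hull of at most `K ^ #patterns` slices, to which Balas' disjunctive
formulation applies. -/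

section ExtendedFormulations

variable {ι : Type} [Fintype ι]

lemma isEF_image {V W ρ : Type*} [AddCommGroup V] [Module ℝ V] [FiniteDimensional ℝ V]
    [AddCommGroup W] [Module ℝ W] [FiniteDimensional ℝ W] [Fintype ρ]
    (A : V →ₗ[ℝ] ρ → ℝ) (b : ρ → ℝ) (C : V →ₗ[ℝ] W) (d : W) (π : V →ᵃ[ℝ] ι → ℝ) :
    IsEF (π '' {y | A y ≤ b ∧ C y = d}) (Fintype.card ρ) := by
  let eV := (Module.finBasis ℝ V).equivFun
  let eW := (Module.finBasis ℝ W).equivFun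
  let eρ := Fintype.equivFin ρ
  refine ⟨_, _, LinearMap.toMatrix' (LinearMap.funLeft ℝ ℝ eρ.symm ∘ₗ A ∘ₗ eV.symm.toLinearMap),
    b ∘ eρ.symm, LinearMap.toMatrix' (eW.toLinearMap ∘ₗ C ∘ₗ eV.symm.toLinearMap), eW d,
    π.comp eV.symm.toLinearMap.toAffineMap, ?_⟩
  have hA (y) : (∀ r, A (eV.symm y) (eρ.symm r) ≤ b (eρ.symm r)) ↔ A (eV.symm y) ≤ b :=
    eρ.symm.forall_congr_left.trans (by simp [Pi.le_def])
  have hC (y) : (∀ r, eW (C (eV.symm y)) r = eW d r) ↔ C (eV.symm y) = d := by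
    rw [← funext_iff, eW.injective.eq_iff]
  ext x
  simp only [LinearMap.toMatrix'_mulVec, LinearMap.comp_apply, LinearMap.funLeft_apply,
    LinearEquiv.coe_coe, Function.comp_apply, hA, hC, AffineMap.comp_apply,
    LinearMap.coe_toAffineMap, Set.mem_image, Set.mem_ofPred_eq]
  exact eV.symm.exists_congr_left.trans (by simp)

lemma convex_image_setOf_le_and_eq {V W ρ E : Type*} [AddCommGroup V] [Module ℝ V]
    [AddCommGroup W] [Module ℝ W] [AddCommGroup E] [Module ℝ E] (A : V →ₗ[ℝ] ρ → ℝ) (b : ρ → ℝ)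
    (C : V →ₗ[ℝ] W) (d : W) (π : V →ᵃ[ℝ] E) : Convex ℝ (π '' {y | A y ≤ b ∧ C y = d}) :=
  (((convex_Iic b).linear_preimage A).inter
    ((convex_singleton d).linear_preimage C)).affine_image π

lemma IsEF.exists_linearMap {P : Set (ι → ℝ)} {k : ℕ} (hP : IsEF P k) :
    ∃ (e l : ℕ) (A : (Fin e → ℝ) →ₗ[ℝ] Fin k → ℝ) (b : Fin k → ℝ)
      (C : (Fin e → ℝ) →ₗ[ℝ] Fin l → ℝ) (d : Fin l → ℝ) (π : (Fin e → ℝ) →ᵃ[ℝ] ι → ℝ),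
      P = π '' {y | A y ≤ b ∧ C y = d} := by
  obtain ⟨e, l, A, b, C, d, π, rfl⟩ := hP
  exact ⟨e, l, A.mulVecLin, b, C.mulVecLin, d, π, by simp [Pi.le_def, funext_iff]⟩

lemma IsEF.inter_linearEq {P : Set (ι → ℝ)} {k : ℕ} (hP : IsEF P k) {W : Type*} [AddCommGroup W]
    [Module ℝ W] [FiniteDimensional ℝ W] (B : (ι → ℝ) →ₗ[ℝ] W) (w : W) :
    IsEF (P ∩ {x | B x = w}) k := by
  obtain ⟨e, l, A, b, C, d, π, rfl⟩ := hP.exists_linearMap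
  have hEF := isEF_image A b (C.prod (B ∘ₗ π.linear)) (d, w - B (π 0)) π
  rw [Fintype.card_fin] at hEF
  convert hEF using 1
  have hπ (y) : B (π y) = B (π.linear y) + B (π 0) := by
    rw [congrFun π.decomp y, Pi.add_apply, map_add]
  rw [← Set.image_inter_preimage]
  congr 1
  ext y
  simp [hπ y, eq_sub_iff_add_eq, and_assoc]

lemma eq_zero_of_forall_add_nsmul_mem {E : Type*} [NormedAddCommGroup E] [NormedSpace ℝ E]
    {P : Set E} (hP : Bornology.IsBounded P) {x v : E} (h : ∀ n : ℕ, x + n • v ∈ P) : v = 0 := by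
  obtain ⟨R, hR⟩ := hP.exists_norm_le
  by_contra hv
  obtain ⟨n, hn⟩ := exists_lt_nsmul (norm_pos_iff.2 hv) (R + ‖x‖)
  refine hn.not_ge ?_
  calc n • ‖v‖ = ‖(x + n • v) - x‖ := by rw [add_sub_cancel_left, RCLike.norm_nsmul ℝ]
    _ ≤ ‖x + n • v‖ + ‖x‖ := norm_sub_le _ _
    _ ≤ R + ‖x‖ := by gcongr; exact hR _ (h n)

lemma exists_smul_mem_image_iff {V W ρ E : Type*} [AddCommGroup V] [Module ℝ V] [AddCommGroup W]
    [Module ℝ W] [NormedAddCommGroup E] [NormedSpace ℝ E] {A : V →ₗ[ℝ] ρ → ℝ} {b : ρ → ℝ}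
    {C : V →ₗ[ℝ] W} {d : W} {π : V →ᵃ[ℝ] E} (hne : {y | A y ≤ b ∧ C y = d}.Nonempty)
    (hbdd : Bornology.IsBounded (π '' {y | A y ≤ b ∧ C y = d})) {t : ℝ} (ht : 0 ≤ t) (x : E) :
    (∃ p ∈ π '' {y | A y ≤ b ∧ C y = d}, t • p = x) ↔
      ∃ y, A y ≤ t • b ∧ C y = t • d ∧ π.linear y + t • π 0 = x := by
  have hπ (y) : π y = π.linear y + π 0 := congrFun π.decomp y
  constructor
  · rintro ⟨_, ⟨y, ⟨hA, hC⟩, rfl⟩, rfl⟩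
    exact ⟨t • y, by rw [map_smul]; exact smul_le_smul_of_nonneg_left hA ht, by rw [map_smul, hC],
      by rw [hπ y, map_smul, smul_add]⟩
  · rintro ⟨y, hA, hC, rfl⟩
    rcases ht.eq_or_lt with rfl | ht
    · obtain ⟨z, hAz, hCz⟩ := hne
      have hray : π.linear y = 0 := by
        refine eq_zero_of_forall_add_nsmul_mem hbdd (x := π z) fun n => ⟨z + n • y, ⟨?_, ?_⟩, ?_⟩
        · rw [zero_smul] at hA
          simpa only [map_add, map_nsmul, add_zero] using add_le_add hAz (nsmul_nonpos hA n)
        · simp only [map_add, map_nsmul, hC, hCz, zero_smul, smul_zero, add_zero]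
        · rw [hπ, hπ z, map_add, map_nsmul, add_right_comm]
      exact ⟨_, ⟨z, ⟨hAz, hCz⟩, rfl⟩, by simp only [hray, zero_smul, add_zero]⟩
    · refine ⟨_, ⟨t⁻¹ • y, ⟨?_, ?_⟩, rfl⟩, ?_⟩
      · rw [map_smul, inv_smul_le_iff_of_pos ht]
        exact hA
      · rw [map_smul, hC, inv_smul_smul₀ ht.ne']
      · rw [hπ, map_smul, smul_add, smul_inv_smul₀ ht.ne']

lemma IsEF.exists_homogenization {P : Set (ι → ℝ)} {k : ℕ} (hP : IsEF P k) (hne : P.Nonempty)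
    (hbdd : Bornology.IsBounded P) :
    ∃ (e l : ℕ) (A : (Fin e → ℝ) × ℝ →ₗ[ℝ] Option (Fin k) → ℝ)
      (C : (Fin e → ℝ) × ℝ →ₗ[ℝ] Fin l → ℝ) (π : (Fin e → ℝ) × ℝ →ₗ[ℝ] ι → ℝ),
      ∀ t x, (∃ y, A (y, t) ≤ 0 ∧ C (y, t) = 0 ∧ π (y, t) = x) ↔ 0 ≤ t ∧ ∃ p ∈ P, t • p = x := by
  obtain ⟨e, l, A, b, C, d, π, rfl⟩ := hP.exists_linearMap
  let A' := A.coprod (-LinearMap.toSpanSingleton ℝ _ b)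
  refine ⟨e, l, LinearMap.pi fun o => o.elim (-LinearMap.snd ℝ _ ℝ) (LinearMap.proj · ∘ₗ A'),
    C.coprod (-LinearMap.toSpanSingleton ℝ _ d),
    π.linear.coprod (LinearMap.toSpanSingleton ℝ _ (π 0)), fun t x => ?_⟩
  rw [and_congr_right fun ht => exists_smul_mem_image_iff hne.of_image hbdd ht x]
  simp [A', Pi.le_def, Option.forall, add_neg_eq_zero, and_assoc]

lemma IsEF.convexHull_iUnion {R : Type*} [Fintype R] {P : R → Set (ι → ℝ)} {k : R → ℕ}
    (hP : ∀ r, IsEF (P r) (k r)) (hne : ∀ r, (P r).Nonempty)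
    (hbdd : ∀ r, Bornology.IsBounded (P r)) :
    IsEF (convexHull ℝ (⋃ r, P r)) (∑ r, (k r + 1)) := by
  classical
  choose e l A C π h using fun r => (hP r).exists_homogenization (hne r) (hbdd r)
  let A' : (Π r, (Fin (e r) → ℝ) × ℝ) →ₗ[ℝ] (Σ r, Option (Fin (k r))) → ℝ :=
    LinearMap.pi fun q => LinearMap.proj q.2 ∘ₗ A q.1 ∘ₗ LinearMap.proj q.1
  let C' : (Π r, (Fin (e r) → ℝ) × ℝ) →ₗ[ℝ] (Π r, Fin (l r) → ℝ) × ℝ :=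
    (LinearMap.pi fun r => C r ∘ₗ LinearMap.proj r).prod
      (∑ r, LinearMap.snd ℝ _ ℝ ∘ₗ LinearMap.proj r)
  let π' : (Π r, (Fin (e r) → ℝ) × ℝ) →ₗ[ℝ] ι → ℝ := ∑ r, π r ∘ₗ LinearMap.proj r
  have hEF := isEF_image A' 0 C' (0, 1) π'.toAffineMap
  simp only [Fintype.card_sigma, Fintype.card_option, Fintype.card_fin] at hEF
  convert hEF using 1
  have hmem (y) : A' y ≤ 0 ∧ C' y = (0, 1) ↔
      (∀ r, A r (y r) ≤ 0 ∧ C r (y r) = 0) ∧ ∑ r, (y r).2 = 1 := by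
    simp [A', C', Pi.le_def, funext_iff, forall_and, and_assoc, Sigma.forall]
  apply Set.Subset.antisymm
  · refine convexHull_min (Set.iUnion_subset fun r p hp => ?_) ?_
    · obtain ⟨y, hA, hC, rfl⟩ := (h r 1 p).2 ⟨zero_le_one, p, hp, one_smul _ _⟩
      refine ⟨Pi.single r (y, 1), (hmem _).2 ⟨fun s => ?_, ?_⟩, ?_⟩
      · rcases eq_or_ne s r with rfl | hs <;> simp [*]
      · rw [Finset.sum_eq_single r] <;> simp +contextual
      · simp only [π', LinearMap.coe_toAffineMap, LinearMap.sum_apply, LinearMap.comp_apply]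
        rw [Finset.sum_eq_single r] <;> simp +contextual
    · exact convex_image_setOf_le_and_eq A' 0 C' (0, 1) π'.toAffineMap
  · rintro _ ⟨y, hy, rfl⟩
    obtain ⟨hAC, hsum⟩ := (hmem y).1 hy
    choose ht p hp hπ using fun r =>
      (h r (y r).2 (π r (y r))).1 ⟨(y r).1, (hAC r).1, (hAC r).2, rfl⟩
    simp only [π', LinearMap.coe_toAffineMap, LinearMap.sum_apply, LinearMap.comp_apply,
      LinearMap.proj_apply, ← hπ]
    exact (convex_convexHull ℝ _).sum_mem (fun r _ => ht r) hsum fun r _ =>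
      subset_convexHull ℝ _ (Set.mem_iUnion_of_mem r (hp r))

end ExtendedFormulations

section Assignments

variable {ι κ : Type*}

/-- The vector of column sums of a fractional assignment, that is, the number of times it uses each
configuration. -/
def colSum [Fintype ι] : (ι × κ → ℝ) →ₗ[ℝ] κ → ℝ :=
  LinearMap.pi fun c => ∑ i, LinearMap.proj (i, c)

lemma colSum_apply [Fintype ι] (y : ι × κ → ℝ) (c : κ) : colSum y c = ∑ i, y (i, c) := by
  simp [colSum]

variable [DecidableEq κ]

/-- The 0/1 vector of an assignment `v` of configurations to machines. -/
def assignVec (v : ι → κ) : ι × κ → ℝ :=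
  fun q => if v q.1 = q.2 then 1 else 0

lemma assignVec_nonneg (v : ι → κ) : 0 ≤ assignVec v := fun _ => by
  unfold assignVec; positivity

lemma sum_assignVec [Fintype κ] (v : ι → κ) (i : ι) : ∑ c, assignVec v (i, c) = 1 := by
  simp [assignVec]

lemma exists_assignVec_eq [Fintype κ] {y : ι × κ → ℝ}
    (h01 : ∀ q, y q = 0 ∨ y q = 1) (hrow : ∀ i, ∑ c, y (i, c) = 1) : ∃ v, assignVec v = y := by
  have hex (i : ι) : ∃ c, y (i, c) = 1 := by
    obtain ⟨c, -, hc⟩ := exists_ne_zero_of_sum_ne_zero ((hrow i).trans_ne one_ne_zero)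
    exact ⟨c, (h01 _).resolve_left hc⟩
  choose v hv using hex
  refine ⟨v, funext fun ⟨i, c⟩ => ?_⟩
  by_cases hc : v i = c
  · simp [assignVec, ← hc, hv]
  · have hrest : ∑ d ∈ univ.erase (v i), y (i, d) = 0 := by
      have := add_sum_erase univ (fun d => y (i, d)) (mem_univ (v i))
      rw [hv, hrow] at this
      linarith
    have hnonneg : ∀ d ∈ univ.erase (v i), 0 ≤ y (i, d) := fun d _ => by
      rcases h01 (i, d) with h | h <;> simp [h]
    rw [(sum_eq_zero_iff_of_nonneg hnonneg).1 hrest c (by simp [Ne.symm hc])]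
    simp [assignVec, hc]

lemma nonneg_and_sum_eq_one_of_mem_convexHull [Fintype κ] {F : Set (ι → κ)} {y : ι × κ → ℝ}
    (hy : y ∈ convexHull ℝ (assignVec '' F)) : 0 ≤ y ∧ ∀ i, ∑ c, y (i, c) = 1 := by
  constructor
  · refine convexHull_min ?_ (convex_Ici 0) hy
    rintro _ ⟨v, -, rfl⟩
    exact assignVec_nonneg v
  · intro i
    let f : (ι × κ → ℝ) →ₗ[ℝ] ℝ := ∑ c, LinearMap.proj (i, c)
    have hf (x : ι × κ → ℝ) : f x = ∑ c, x (i, c) := by simp [f]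
    rw [← hf]
    refine convexHull_min ?_ ((convex_singleton 1).linear_preimage f) hy
    rintro _ ⟨v, -, rfl⟩
    exact (hf _).trans (sum_assignVec v i)

variable [Fintype ι]

/-- The vector counting how often an assignment uses each configuration, with values in an
arbitrary semiring since it is needed over `ℕ`, `ℤ`, `ℝ` and `ZMod K`. -/
def usage (R : Type*) [Semiring R] (v : ι → κ) : κ → R :=
  ∑ i, Pi.single (v i) 1

lemma usage_apply (R : Type*) [Semiring R] (v : ι → κ) (c : κ) : usage R v c = #{i | v i = c} := by
  simp [usage, Pi.single_apply, eq_comm]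

lemma comp_usage {R S : Type*} [Semiring R] [Semiring S] (f : R →+* S) (v : ι → κ) :
    f ∘ usage R v = usage S v := by
  ext c; simp [usage_apply]

lemma exists_usage_sub_eq_smul {K : ℕ} {v v' : ι → κ} (h : usage (ZMod K) v = usage (ZMod K) v') :
    ∃ d : κ → ℤ, usage ℤ v' - usage ℤ v = (K : ℤ) • d := by
  have hdvd (c : κ) : (K : ℤ) ∣ usage ℤ v' c - usage ℤ v c := by
    rw [← ZMod.intCast_eq_intCast_iff_dvd_sub]
    simpa [usage_apply] using congrFun h c
  choose d hd using hdvd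
  exact ⟨d, funext hd⟩

lemma usage_comp_perm (R : Type*) [Semiring R] (v : ι → κ) (σ : Equiv.Perm ι) :
    usage R (v ∘ σ) = usage R v :=
  Equiv.sum_comp σ fun i => Pi.single (v i) 1

lemma colSum_assignVec (v : ι → κ) : colSum (assignVec v) = usage ℝ v := by
  ext c; simp [colSum_apply, usage_apply, assignVec]

variable [Fintype κ]

lemma usage_le_usage_add {K : ℕ} {v v' : ι → κ} {c : κ}
    (h : ∀ c' ≠ c, #{i | v i = c ∧ v' i = c'} ≤ K) :
    usage ℤ v c ≤ usage ℤ v' c + Fintype.card κ * K := by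
  classical
  have hsub : ({i | v i = c} : Finset ι) ⊆
      ({i | v' i = c} : Finset ι) ∪ (univ.erase c).biUnion fun c' => {i | v i = c ∧ v' i = c'} :=
    fun i => by by_cases hi : v' i = c <;> simp [hi]
  have hbiUnion : #((univ.erase c).biUnion fun c' => {i | v i = c ∧ v' i = c'}) ≤
      #(univ.erase c) * K :=
    card_biUnion_le_card_mul _ _ _ fun c' hc' => h c' (ne_of_mem_erase hc')
  simp only [usage_apply]
  norm_cast
  calc #{i | v i = c} ≤ _ := (card_le_card hsub).trans (card_union_le _ _)
    _ ≤ #{i | v' i = c} + Fintype.card κ * K := by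
      gcongr
      exact hbiUnion.trans (by gcongr; exact card_le_univ _)

lemma abs_usage_sub_le {K : ℕ} {v v' : ι → κ}
    (h : ∀ c c', c' ≠ c → #{i | v i = c ∧ v' i = c'} ≤ K) (c : κ) :
    |usage ℤ v' c - usage ℤ v c| ≤ Fintype.card κ * K := by
  have hle := usage_le_usage_add (h c)
  have hge := usage_le_usage_add (v := v') (v' := v) (c := c) (K := K) fun c' hc' => by
    simpa only [and_comm] using h c' c hc'.symm
  rw [abs_le]
  constructor <;> linarith

lemma exists_usage_eq {X : κ → ℕ} (hX : ∑ c, X c = Fintype.card ι) :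
    ∃ v : ι → κ, usage ℕ v = X := by
  let e : ι ≃ Σ c, Fin (X c) := Fintype.equivOfCardEq (by simp [hX])
  refine ⟨fun i => (e i).1, funext fun c => ?_⟩
  rw [usage_apply, Nat.cast_id, ← Fintype.card_subtype,
    Fintype.card_congr (e.subtypeEquiv (p := fun i => (e i).1 = c) (q := (·.1 = c)) fun _ => .rfl),
    Fintype.card_congr (Equiv.sigmaSubtype c), Fintype.card_fin]

-- The matrix splits each column of `y` evenly among the machines using that configuration in `v`.
lemma exists_doublyStochastic_sum_mul_assignVec [DecidableEq ι] {y : ι × κ → ℝ} (hy : 0 ≤ y)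
    (hrow : ∀ i, ∑ c, y (i, c) = 1) {v : ι → κ} (hcol : colSum y = usage ℝ v) :
    ∃ M ∈ doublyStochastic ℝ ι, ∀ i c, ∑ j, M i j * assignVec v (j, c) = y (i, c) := by
  let M : Matrix ι ι ℝ := fun i j => y (i, v j) / usage ℝ v (v j)
  have hzero (i c) (h : usage ℝ v c = 0) : y (i, c) = 0 := by
    rw [← hcol, colSum_apply] at h
    exact (sum_eq_zero_iff_of_nonneg fun i _ => hy (i, c)).1 h i (mem_univ i)
  have hM (i c) : ∑ j, M i j * assignVec v (j, c) = y (i, c) := by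
    calc ∑ j, M i j * assignVec v (j, c)
        = ∑ j, (y (i, c) / usage ℝ v c) * assignVec v (j, c) := sum_congr rfl fun j _ => by
          by_cases h : v j = c <;> simp [M, assignVec, h]
      _ = y (i, c) / usage ℝ v c * usage ℝ v c := by
          rw [← mul_sum, ← colSum_apply, colSum_assignVec]
      _ = y (i, c) := div_mul_cancel_of_imp (hzero i c)
  refine ⟨M, mem_doublyStochastic_iff_sum.2 ⟨fun i j => ?_, fun i => ?_, fun j => ?_⟩, hM⟩
  · exact div_nonneg (hy _) (by rw [usage_apply]; positivity)
  · calc ∑ j, M i j = ∑ j, ∑ c, M i j * assignVec v (j, c) := by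
          simp only [← mul_sum, sum_assignVec, mul_one]
      _ = 1 := by rw [sum_comm]; simp only [hM, hrow]
  · rw [← sum_div, ← colSum_apply, hcol, div_self]
    rw [usage_apply, Nat.cast_ne_zero, ← Nat.pos_iff_ne_zero, card_pos]
    exact ⟨j, by simp⟩

lemma mem_convexHull_assignVec_comp_perm {y : ι × κ → ℝ} (hy : 0 ≤ y)
    (hrow : ∀ i, ∑ c, y (i, c) = 1) {v : ι → κ} (hcol : colSum y = usage ℝ v) :
    y ∈ convexHull ℝ (Set.range fun σ : Equiv.Perm ι => assignVec (v ∘ σ)) := by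
  classical
  obtain ⟨M, hM, hMy⟩ := exists_doublyStochastic_sum_mul_assignVec hy hrow hcol
  obtain ⟨w, hw0, hw1, rfl⟩ := exists_eq_sum_perm_of_mem_doublyStochastic hM
  have hperm (σ : Equiv.Perm ι) (i : ι) (c : κ) :
      ∑ j, σ.permMatrix ℝ i j * assignVec v (j, c) = assignVec (v ∘ σ) (i, c) :=
    congrFun (Matrix.permMatrix_mulVec (v := fun j => assignVec v (j, c)) σ) i
  have hyw : y = ∑ σ, w σ • assignVec (v ∘ σ) := by
    ext ⟨i, c⟩
    simp only [← hMy, ← hperm, Matrix.sum_apply, Matrix.smul_apply, Finset.sum_apply, Pi.smul_apply,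
      smul_eq_mul, sum_mul, mul_sum, mul_assoc]
    exact sum_comm
  rw [hyw]
  exact (convex_convexHull ℝ _).sum_mem (fun σ _ => hw0 σ) hw1 fun σ _ =>
    subset_convexHull ℝ _ ⟨σ, rfl⟩

lemma mem_convexHull_assignVec_of_colSum_eq_natCast {y : ι × κ → ℝ} (hy : 0 ≤ y)
    (hrow : ∀ i, ∑ c, y (i, c) = 1) {X : κ → ℕ} (hcol : colSum y = (↑) ∘ X) :
    y ∈ convexHull ℝ (assignVec '' {v | usage ℕ v = X}) := by
  have hX : ∑ c, X c = Fintype.card ι := by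
    rw [← Nat.cast_inj (R := ℝ), Nat.cast_sum]
    calc ∑ c, (X c : ℝ) = ∑ c, ∑ i, y (i, c) := by simp only [← colSum_apply, hcol]; rfl
      _ = Fintype.card ι := by rw [sum_comm]; simp [hrow]
  obtain ⟨v, rfl⟩ := exists_usage_eq hX
  refine convexHull_mono ?_ (mem_convexHull_assignVec_comp_perm hy hrow
    (hcol.trans (comp_usage (Nat.castRingHom ℝ) v)))
  rintro _ ⟨σ, rfl⟩
  exact ⟨v ∘ σ, usage_comp_perm ℕ v σ, rfl⟩

end Assignments

section LayeredFlow

/-- A nonnegative flow in the layered network with node set `S` in each of the layers `0, …, m` and,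
between consecutive layers, an arc from `s` to `s + g c` for every configuration `c`: `h i s` is the
throughput of the node `s` of layer `i`, and `f i s c` is the flow on the arc `c` leaving it. -/
structure IsLayeredFlow {S κ : Type*} [AddGroup S] [Fintype κ] {m : ℕ} (g : κ → S)
    (h : Fin (m + 1) → S → ℝ) (f : Fin m → S → κ → ℝ) : Prop where
  nonneg : 0 ≤ f
  outflow : ∀ i s, ∑ c, f i s c = h i.castSucc s
  inflow : ∀ i s, ∑ c, f i (s - g c) c = h i.succ s

namespace IsLayeredFlow

variable {S κ : Type*} [AddGroup S] [Fintype κ] {m : ℕ} {g : κ → S}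

lemma tail {h : Fin (m + 2) → S → ℝ} {f : Fin (m + 1) → S → κ → ℝ} (hf : IsLayeredFlow g h f) :
    IsLayeredFlow g (Fin.tail h) (Fin.tail f) where
  nonneg i := hf.nonneg i.succ
  outflow i := hf.outflow i.succ
  inflow i := hf.inflow i.succ

variable {h : Fin (m + 1) → S → ℝ} {f : Fin m → S → κ → ℝ}

lemma le_throughput_castSucc (hf : IsLayeredFlow g h f) (i : Fin m) (s : S) (c : κ) :
    f i s c ≤ h i.castSucc s := by
  rw [← hf.outflow]
  exact single_le_sum (fun c _ => hf.nonneg i s c) (mem_univ c)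

lemma le_throughput_succ (hf : IsLayeredFlow g h f) (i : Fin m) (s : S) (c : κ) :
    f i s c ≤ h i.succ (s + g c) := by
  rw [← hf.inflow]
  simpa using single_le_sum (f := fun c' => f i (s + g c - g c') c')
    (fun c' _ => hf.nonneg i _ c') (mem_univ c)

lemma sum_throughput_succ_mul [Fintype S] (hf : IsLayeredFlow g h f) (i : Fin m) (φ : S → ℝ) :
    ∑ s, h i.succ s * φ s = ∑ s, ∑ c, f i s c * φ (s + g c) :=
  calc ∑ s, h i.succ s * φ s = ∑ c, ∑ s, f i (s - g c) c * φ s := by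
        simp only [← hf.inflow, sum_mul]
        exact sum_comm
    _ = ∑ c, ∑ s, f i s c * φ (s + g c) := sum_congr rfl fun c _ =>
        Fintype.sum_equiv (Equiv.subRight (g c)) _ _ fun s => by simp
    _ = ∑ s, ∑ c, f i s c * φ (s + g c) := sum_comm

end IsLayeredFlow

/-- The matrix with first row `x` and remaining rows those of `z`. -/
def prependRow {κ : Type*} {m : ℕ} (x : κ → ℝ) (z : Fin m × κ → ℝ) : Fin (m + 1) × κ → ℝ :=
  fun q => Fin.cons (α := fun _ => κ → ℝ) x (Function.curry z) q.1 q.2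

lemma assignVec_cons {κ : Type*} [DecidableEq κ] {m : ℕ} (c : κ) (v : Fin m → κ) :
    assignVec (Fin.cons c v : Fin (m + 1) → κ) = prependRow (Pi.single c 1) (assignVec v) := by
  ext ⟨i, c'⟩
  cases i using Fin.cases <;> simp [assignVec, prependRow, Pi.single_apply, eq_comm]

lemma prependRow_mem_convexHull_image {κ : Type*} {m : ℕ} {x : κ → ℝ} {s : Set (Fin m × κ → ℝ)}
    {z : Fin m × κ → ℝ} (hz : z ∈ convexHull ℝ s) :
    prependRow x z ∈ convexHull ℝ (prependRow x '' s) := by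
  refine convexHull_min (t := prependRow x ⁻¹' convexHull ℝ (prependRow x '' s))
    (fun z hz => subset_convexHull ℝ _ ⟨z, hz, rfl⟩) (fun z hz w hw a b ha hb hab => ?_) hz
  have haff : prependRow x (a • z + b • w) = a • prependRow x z + b • prependRow x w := by
    ext ⟨i, c⟩
    cases i using Fin.cases <;> simp [prependRow, ← add_mul, hab]
  rw [Set.mem_preimage, haff]
  exact convex_convexHull ℝ _ hz hw ha hb hab

section Decomposition

variable {S κ : Type*} [AddCommGroup S] [DecidableEq κ] {m : ℕ} {g : κ → S}

lemma prependRow_mem_convexHull_assignVec {s r : S} {c : κ} {z : Fin m × κ → ℝ}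
    (hz : z ∈ convexHull ℝ (assignVec '' {v | s + g c + ∑ i, g (v i) = r})) :
    prependRow (Pi.single c 1) z ∈ convexHull ℝ (assignVec '' {v | s + ∑ i, g (v i) = r}) := by
  refine convexHull_mono ?_ (prependRow_mem_convexHull_image hz)
  rintro _ ⟨_, ⟨v, hv, rfl⟩, rfl⟩
  refine ⟨Fin.cons c v, ?_, assignVec_cons c v⟩
  simpa [Fin.sum_univ_succ, add_assoc] using hv

variable [Fintype κ]

lemma IsLayeredFlow.sum_smul_prependRow_mem_convexHull {h : Fin (m + 2) → S → ℝ}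
    {f : Fin (m + 1) → S → κ → ℝ} (hf : IsLayeredFlow g h f) {r : S} {y : S → Fin m × κ → ℝ}
    (hy : ∀ s, h 1 s ≠ 0 → y s ∈ convexHull ℝ (assignVec '' {v | s + ∑ i, g (v i) = r})) {s : S}
    (hs : h 0 s ≠ 0) :
    ∑ c, (f 0 s c / h 0 s) • prependRow (Pi.single c 1) (y (s + g c)) ∈
      convexHull ℝ (assignVec '' {v | s + ∑ i, g (v i) = r}) := by
  have hs_nonneg : 0 ≤ h 0 s := by
    rw [← Fin.castSucc_zero, ← hf.outflow]
    exact sum_nonneg fun c _ => hf.nonneg 0 s c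
  have hmem (c) (hc : f 0 s c / h 0 s ≠ 0) : prependRow (Pi.single c 1) (y (s + g c)) ∈
      convexHull ℝ (assignVec '' {v | s + ∑ i, g (v i) = r}) := by
    have hpos : 0 < f 0 s c := (hf.nonneg 0 s c).lt_of_ne' (div_ne_zero_iff.1 hc).1
    exact prependRow_mem_convexHull_assignVec
      (hy (s + g c) (hpos.trans_le (hf.le_throughput_succ 0 s c)).ne')
  have hsum : ∑ᶠ c, f 0 s c / h 0 s = 1 := by
    rw [finsum_eq_sum_of_fintype, ← sum_div, hf.outflow, Fin.castSucc_zero, div_self hs]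
  simpa only [finsum_eq_sum_of_fintype] using (convex_convexHull ℝ _).finsum_mem
    (fun c => div_nonneg (hf.nonneg 0 s c) hs_nonneg) hsum hmem

variable [Fintype S]

lemma IsLayeredFlow.exists_mem_convexHull {h : Fin (m + 1) → S → ℝ} {f : Fin m → S → κ → ℝ}
    (hf : IsLayeredFlow g h f) {r : S} (hr : ∀ s ≠ r, h (Fin.last m) s = 0) :
    ∃ y : S → Fin m × κ → ℝ,
      (∀ s, h 0 s ≠ 0 → y s ∈ convexHull ℝ (assignVec '' {v | s + ∑ i, g (v i) = r})) ∧
      ∀ i c, ∑ s, f i s c = ∑ s, h 0 s * y s (i, c) := by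
  induction m with
  | zero =>
    refine ⟨fun _ => assignVec Fin.elim0, fun s hs => subset_convexHull ℝ _ ⟨_, ?_, rfl⟩,
      fun i => i.elim0⟩
    simpa using not_imp_comm.1 (hr s) hs
  | succ m ih =>
    obtain ⟨y', hy', hfy'⟩ := ih hf.tail hr
    let y (s : S) : Fin (m + 1) × κ → ℝ :=
      ∑ c, (f 0 s c / h 0 s) • prependRow (Pi.single c 1) (y' (s + g c))
    have hy (s q) : h 0 s * y s q = ∑ c, f 0 s c * prependRow (Pi.single c 1) (y' (s + g c)) q := by
      have hzero (c) (hs : h 0 s = 0) : f 0 s c = 0 :=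
        le_antisymm ((hf.le_throughput_castSucc 0 s c).trans_eq hs) (hf.nonneg 0 s c)
      simp only [y, Finset.sum_apply, Pi.smul_apply, smul_eq_mul, mul_sum, ← mul_assoc,
        mul_div_cancel_of_imp' (hzero _)]
    refine ⟨y, fun s hs => hf.sum_smul_prependRow_mem_convexHull hy' hs, fun i c => ?_⟩
    cases i using Fin.cases with
    | zero => simp [hy, prependRow, Pi.single_apply]
    | succ i =>
      calc ∑ s, f i.succ s c = ∑ s, h (Fin.succ 0) s * y' s (i, c) := hfy' i c
        _ = ∑ s, ∑ c', f 0 s c' * y' (s + g c') (i, c) := hf.sum_throughput_succ_mul 0 _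
        _ = ∑ s, h 0 s * y s (i.succ, c) := by simp only [hy]; rfl

lemma IsLayeredFlow.sum_mem_convexHull [DecidableEq S] {h : Fin (m + 1) → S → ℝ}
    {f : Fin m → S → κ → ℝ} (hf : IsLayeredFlow g h f) {r : S} (h_first : h 0 = Pi.single 0 1)
    (h_last : h (Fin.last m) = Pi.single r 1) :
    (fun q => ∑ s, f q.1 s q.2) ∈ convexHull ℝ (assignVec '' {v | ∑ i, g (v i) = r}) := by
  obtain ⟨y, hy, hfy⟩ := hf.exists_mem_convexHull (r := r) fun s hs => by simp [h_last, hs]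
  have hfy0 : (fun q => ∑ s, f q.1 s q.2) = y 0 := by
    ext ⟨i, c⟩
    simp [hfy, h_first, Pi.single_apply]
  simpa [hfy0] using hy 0 (by simp [h_first])

end Decomposition

lemma partialSum_last {S : Type*} [AddCommMonoid S] {m : ℕ} (u : Fin m → S) :
    Fin.partialSum u (Fin.last m) = ∑ i, u i := by
  rw [Fin.partialSum, Fin.val_last, List.take_of_length_le (by simp), List.sum_ofFn]

section ExtendedFormulation

variable {S κ : Type*} [AddGroup S] [Fintype κ] {m : ℕ}

lemma isLayeredFlow_path [DecidableEq S] [DecidableEq κ] (g : κ → S) (v : Fin m → κ) :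
    IsLayeredFlow g (fun i => Pi.single (Fin.partialSum (g ∘ v) i) 1)
      fun i => Pi.single (Fin.partialSum (g ∘ v) i.castSucc) (Pi.single (v i) 1) where
  nonneg i s c := by simp only [Pi.single_apply, ite_apply, Pi.zero_apply]; positivity
  outflow i s := by
    by_cases hs : s = Fin.partialSum (g ∘ v) i.castSucc
    · subst hs; simp
    · simp [hs]
  inflow i s := by
    rw [sum_eq_single (v i) (fun c _ hc => ?_) (by simp)]
    · simp [Fin.partialSum_succ, Pi.single_apply, sub_eq_iff_eq_add, ite_apply]
    · simp [Pi.single_apply, hc, ite_apply]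

/-- The map sending the throughputs and flows of a layered network to the imbalances at the nodes
and to the throughputs of the first and last layers. -/
def layeredFlowMap (g : κ → S) : (Fin (m + 1) → S → ℝ) × (Fin m → S → κ → ℝ) →ₗ[ℝ]
    (Fin m → S → ℝ) × (Fin m → S → ℝ) × (S → ℝ) × (S → ℝ) where
  toFun p := (fun i s => ∑ c, p.2 i s c - p.1 i.castSucc s,
    fun i s => ∑ c, p.2 i (s - g c) c - p.1 i.succ s, p.1 0, p.1 (Fin.last m))
  map_add' p q := by
    ext <;> simp [sum_add_distrib, add_sub_add_comm]
  map_smul' a p := by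
    ext <;> simp [mul_sum, mul_sub]

lemma isLayeredFlow_iff_layeredFlowMap {g : κ → S} {h : Fin (m + 1) → S → ℝ}
    {f : Fin m → S → κ → ℝ} :
    IsLayeredFlow g h f ↔ 0 ≤ f ∧ layeredFlowMap g (h, f) = (0, 0, h 0, h (Fin.last m)) := by
  simp only [layeredFlowMap, LinearMap.coe_mk, AddHom.coe_mk, Prod.mk.injEq, funext_iff,
    Pi.zero_apply, sub_eq_zero, and_true]
  exact ⟨fun hf => ⟨hf.nonneg, hf.outflow, hf.inflow⟩, fun hf => ⟨hf.1, hf.2.1, hf.2.2⟩⟩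

end ExtendedFormulation

lemma isEF_convexHull_assignVec_sum_eq {S : Type*} [AddCommGroup S] [Fintype S] {κ : Type}
    [Fintype κ] [DecidableEq κ] {m : ℕ} (g : κ → S) (r : S) :
    IsEF (convexHull ℝ (assignVec '' {v : Fin m → κ | ∑ i, g (v i) = r}))
      (m * (Fintype.card S * Fintype.card κ)) := by
  classical
  let A : (Fin (m + 1) → S → ℝ) × (Fin m → S → κ → ℝ) →ₗ[ℝ] Fin m × S × κ → ℝ :=
    -LinearMap.pi fun q => LinearMap.proj q.2.2 ∘ₗ LinearMap.proj q.2.1 ∘ₗ LinearMap.proj q.1 ∘ₗ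
      LinearMap.snd ℝ _ _
  let d : (Fin m → S → ℝ) × (Fin m → S → ℝ) × (S → ℝ) × (S → ℝ) :=
    (0, 0, Pi.single 0 1, Pi.single r 1)
  let π : (Fin (m + 1) → S → ℝ) × (Fin m → S → κ → ℝ) →ₗ[ℝ] Fin m × κ → ℝ :=
    LinearMap.pi fun q => ∑ s, LinearMap.proj q.2 ∘ₗ LinearMap.proj s ∘ₗ LinearMap.proj q.1 ∘ₗ
      LinearMap.snd ℝ _ _
  have hEF := isEF_image A 0 (layeredFlowMap g) d π.toAffineMap
  simp only [Fintype.card_prod, Fintype.card_fin] at hEF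
  convert hEF using 1
  have hmem (h f) : A (h, f) ≤ 0 ∧ layeredFlowMap g (h, f) = d ↔
      IsLayeredFlow g h f ∧ h 0 = Pi.single 0 1 ∧ h (Fin.last m) = Pi.single r 1 := by
    have hA : A (h, f) ≤ 0 ↔ 0 ≤ f := by simp [A, Pi.le_def]
    rw [hA, isLayeredFlow_iff_layeredFlowMap]
    simp [layeredFlowMap, d, and_assoc]
  have hπ (h f i c) : π.toAffineMap (h, f) (i, c) = ∑ s, f i s c := by simp [π]
  apply Set.Subset.antisymm
  · refine convexHull_min ?_ (convex_image_setOf_le_and_eq A 0 _ d π.toAffineMap)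
    rintro _ ⟨v, hv, rfl⟩
    refine ⟨_, (hmem _ _).2 ⟨isLayeredFlow_path g v, ?_, ?_⟩, ?_⟩
    · simp
    · rw [← show ∑ i, g (v i) = r from hv]
      simp [partialSum_last]
    · ext ⟨i, c⟩
      rw [hπ]
      simp [assignVec, Pi.single_apply, ite_apply, eq_comm]
  · rintro _ ⟨⟨h, f⟩, hhf, rfl⟩
    obtain ⟨hf, h_first, h_last⟩ := (hmem h f).1 hhf
    convert hf.sum_mem_convexHull h_first h_last using 1
    ext ⟨i, c⟩
    exact hπ h f i c

end LayeredFlow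

section Denominators

/-- The scalar `k` clears denominators for `G` if it turns every vector over `R` that is an
`S`-linear combination of vectors in `G` into an `R`-linear combination of them. -/
def ClearsDenominators {R τ : Type*} (S : Type*) [CommRing R] [CommRing S] [Algebra R S] (k : R)
    (G : Set (τ → R)) : Prop :=
  ∀ β : τ → R, algebraMap R S ∘ β ∈ Submodule.span S ((algebraMap R S ∘ ·) '' G) →
    k • β ∈ Submodule.span R G

variable {R S τ : Type*} [CommRing R] [CommRing S] [Algebra R S]

lemma ClearsDenominators.of_dvd {k l : R} {G : Set (τ → R)} (hk : ClearsDenominators S k G)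
    (hkl : k ∣ l) : ClearsDenominators S l G := by
  obtain ⟨a, rfl⟩ := hkl
  intro β hβ
  rw [mul_comm, mul_smul]
  exact Submodule.smul_mem _ a (hk β hβ)

-- Otherwise some functional over `R` would vanish on `G` but not at `β`; so would its extension
-- to `S`.
lemma mkQ_mem_torsion_of_mem_span [IsDomain R] [IsPrincipalIdealRing R] [FaithfulSMul R S]
    [Finite τ] {G : Set (τ → R)} {β : τ → R}
    (hβ : algebraMap R S ∘ β ∈ Submodule.span S ((algebraMap R S ∘ ·) '' G)) :
    (Submodule.span R G).mkQ β ∈ Submodule.torsion R ((τ → R) ⧸ Submodule.span R G) := by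
  have := Fintype.ofFinite τ
  classical
  set T := Submodule.torsion R ((τ → R) ⧸ Submodule.span R G)
  rw [← Submodule.Quotient.mk_eq_zero, ← Module.forall_dual_apply_eq_zero_iff R]
  intro φ
  obtain ⟨w, hw⟩ := (dotProductEquiv R τ).surjective (φ ∘ₗ T.mkQ ∘ₗ (Submodule.span R G).mkQ)
  have hφ (x : τ → R) : w ⬝ᵥ x = φ (T.mkQ ((Submodule.span R G).mkQ x)) :=
    LinearMap.congr_fun hw x
  have hwG : ∀ y ∈ Submodule.span S ((algebraMap R S ∘ ·) '' G), (algebraMap R S ∘ w) ⬝ᵥ y = 0 := by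
    intro y hy
    induction hy using Submodule.span_induction with
    | mem _ hy =>
      obtain ⟨x, hx, rfl⟩ := hy
      have hx0 : (Submodule.span R G).mkQ x = 0 := by
        simpa using Submodule.subset_span hx
      rw [← RingHom.map_dotProduct, hφ, hx0, map_zero, map_zero, map_zero]
    | zero => exact dotProduct_zero _
    | add x y _ _ hx hy => rw [dotProduct_add, hx, hy, add_zero]
    | smul a x _ hx => rw [dotProduct_smul, hx, smul_zero]
  have hzero := hwG _ hβ
  rw [← RingHom.map_dotProduct, hφ] at hzero
  exact (FaithfulSMul.algebraMap_eq_zero_iff R S).1 hzero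

lemma exists_clearsDenominators [IsDomain R] [IsPrincipalIdealRing R] (S : Type*) [CommRing S]
    [Algebra R S] [FaithfulSMul R S] [Finite τ] (G : Set (τ → R)) :
    ∃ k : R, k ≠ 0 ∧ ClearsDenominators S k G := by
  obtain ⟨k, hk, hk0⟩ := Submodule.annihilator_top_inter_nonZeroDivisors
    (Submodule.torsion_isTorsion (R := R) (M := (τ → R) ⧸ Submodule.span R G))
  refine ⟨k, nonZeroDivisors.ne_zero hk0, fun β hβ => ?_⟩
  have hkβ := Submodule.mem_annihilator.1 hk ⟨_, mkQ_mem_torsion_of_mem_span hβ⟩ trivial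
  rw [← Submodule.Quotient.mk_eq_zero]
  exact congrArg Subtype.val hkβ

lemma exists_forall_subset_clearsDenominators [IsDomain R] [IsPrincipalIdealRing R] (S : Type*)
    [CommRing S] [Algebra R S] [FaithfulSMul R S] [Finite τ] {B : Set (τ → R)} (hB : B.Finite) :
    ∃ k : R, k ≠ 0 ∧ ∀ G ⊆ B, ClearsDenominators S k G := by
  choose k hk0 hk using exists_clearsDenominators (R := R) (τ := τ) S
  refine ⟨∏ G ∈ hB.finite_subsets.toFinset, k G, prod_ne_zero_iff.2 fun G _ => hk0 G,
    fun G hG => (hk G).of_dvd (dvd_prod_of_mem k (by simpa using hG))⟩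

lemma mulVec_algebraMap_comp {κ : Type*} [Fintype κ] (A : Matrix τ κ R) (d : κ → R) :
    (A.map (algebraMap R S)).mulVec (algebraMap R S ∘ d) = algebraMap R S ∘ A.mulVec d :=
  funext fun t => (RingHom.map_mulVec _ A d t).symm

lemma algebraMap_comp_mem_span {κ : Type*} {D : Set (κ → R)} {z : κ → R}
    (hz : z ∈ Submodule.span R D) :
    algebraMap R S ∘ z ∈ Submodule.span S ((algebraMap R S ∘ ·) '' D) := by
  have hmap := Submodule.mem_map_of_mem (f := (Algebra.linearMap R S).compLeft κ) hz
  rw [← Submodule.span_image] at hmap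
  exact Submodule.span_le_restrictScalars R S _ hmap

lemma exists_algebraMap_comp_eq {κ K : Type*} [Fintype κ] [Field K] [Algebra R K]
    [FaithfulSMul R K] {A : Matrix τ κ R} {D : Set (κ → R)} {k : R} (hk0 : k ≠ 0)
    (hk : ClearsDenominators K k (A.mulVec '' D)) {x : κ → K}
    (hx : x ∈ Submodule.span K ((algebraMap R K ∘ ·) '' D))
    (hinj : ∀ u ∈ Submodule.span K ((algebraMap R K ∘ ·) '' D),
      (A.map (algebraMap R K)).mulVec u = 0 → u = 0)
    {β : τ → R} (hβ : (A.map (algebraMap R K)).mulVec x = algebraMap R K ∘ (k • β)) :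
    ∃ z ∈ Submodule.span R D, algebraMap R K ∘ z = x := by
  have hβ_mem : algebraMap R K ∘ β ∈
      Submodule.span K ((algebraMap R K ∘ ·) '' (A.mulVec '' D)) := by
    have hAx : algebraMap R K k • (algebraMap R K ∘ β) ∈
        (Submodule.span K ((algebraMap R K ∘ ·) '' D)).map
          (A.map (algebraMap R K)).mulVecLin := ⟨x, hx, by
      rw [Matrix.mulVecLin_apply, hβ]; ext; simp⟩
    rw [← Submodule.span_image, Submodule.smul_mem_iff _
      ((FaithfulSMul.algebraMap_eq_zero_iff R K).not.2 hk0)] at hAx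
    simpa only [Set.image_image, Matrix.mulVecLin_apply,
      mulVec_algebraMap_comp] using hAx
  obtain ⟨z, hz, hzβ⟩ : k • β ∈ (Submodule.span R D).map A.mulVecLin := by
    rw [← Submodule.span_image]; exact hk β hβ_mem
  refine ⟨z, hz, ?_⟩
  refine sub_eq_zero.1 (hinj _ (Submodule.sub_mem _ (algebraMap_comp_mem_span hz) hx) ?_)
  rw [Matrix.mulVec_sub, mulVec_algebraMap_comp, hβ, ← hzβ, Matrix.mulVecLin_apply, sub_self]

end Denominators

section FeasibleDirections

variable {E : Type*} [AddCommGroup E] [Module ℝ E] {C s : Set E} {x y z : E}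

/-- The cone of feasible directions of `C` at `y`: its lineality space is parallel to the smallest
face of the polytope `C` containing `y`. -/
def feasibleCone (C : Set E) (y : E) : PointedCone ℝ E :=
  PointedCone.hull ℝ ((· - y) '' C)

lemma sub_mem_feasibleCone (hx : x ∈ C) : x - y ∈ feasibleCone C y :=
  Submodule.subset_span ⟨x, hx, rfl⟩

lemma exists_forall_mem_of_mem_feasibleCone (hC : Convex ℝ C) (hy : y ∈ C)
    (hz : z ∈ feasibleCone C y) : ∃ ε > (0 : ℝ), y + ε • z ∈ C := by
  induction hz using Submodule.span_induction with
  | mem _ hx =>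
    obtain ⟨x, hx, rfl⟩ := hx
    exact ⟨1, one_pos, by simpa using hx⟩
  | zero => exact ⟨1, one_pos, by simpa using hy⟩
  | add u v _ _ hu hv =>
    obtain ⟨ε, hε, hu⟩ := hu
    obtain ⟨δ, hδ, hv⟩ := hv
    refine ⟨ε * δ / (ε + δ), by positivity, ?_⟩
    convert hC hu hv (a := δ / (ε + δ)) (b := ε / (ε + δ)) (by positivity) (by positivity)
      (by field_simp; ring) using 1
    match_scalars <;> field_simp
    ring
  | smul r u _ hu =>
    obtain ⟨ε, hε, hu⟩ := hu
    obtain ⟨r, hr⟩ := r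
    rcases hr.eq_or_lt with rfl | hr
    · exact ⟨1, one_pos, by simpa using hy⟩
    · refine ⟨ε / r, by positivity, ?_⟩
      rw [Nonneg.mk_smul, smul_smul, div_mul_cancel₀ _ hr.ne']
      exact hu

lemma eq_zero_of_mem_lineal_feasibleCone {W : Type*} [AddCommGroup W] [Module ℝ W]
    (hC : Convex ℝ C) {f : E →ₗ[ℝ] W} {b : W} (hy : y ∈ (C ∩ {x | f x = b}).extremePoints ℝ)
    (hz : z ∈ (feasibleCone C y).lineal) (hfz : f z = 0) : z = 0 := by
  obtain ⟨⟨hyC, hyb⟩, hext⟩ := mem_extremePoints_iff_left.1 hy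
  obtain ⟨ε, hε, hεz⟩ := exists_forall_mem_of_mem_feasibleCone hC hyC hz.1
  obtain ⟨δ, hδ, hδz⟩ := exists_forall_mem_of_mem_feasibleCone hC hyC hz.2
  have hslice (t : ℝ) (ht : y + t • z ∈ C) : y + t • z ∈ C ∩ {x | f x = b} :=
    ⟨ht, by simpa [hfz] using hyb⟩
  have hy_mem : y ∈ openSegment ℝ (y + ε • z) (y + (-δ) • z) := by
    refine ⟨δ / (ε + δ), ε / (ε + δ), by positivity, by positivity, by field_simp; ring, ?_⟩
    match_scalars <;> field_simp <;> ring
  have hyz := hext _ (hslice ε hεz) _ (hslice (-δ) (by simpa using hδz)) hy_mem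
  simpa [hε.ne'] using hyz

lemma sub_mem_lineal_of_add_eq_add {w w' x' : E} (hw : w ∈ C) (hw' : w' ∈ C)
    (hx : x - y ∈ (feasibleCone C y).lineal) (hx' : x' - y ∈ (feasibleCone C y).lineal)
    (h : w + w' = x + x') : w - y ∈ (feasibleCone C y).lineal := by
  refine (PointedCone.IsFaceOf.lineal _).mem_of_add_mem_left (sub_mem_feasibleCone hw)
    (sub_mem_feasibleCone hw') ?_
  have := add_mem hx hx'
  rwa [sub_add_sub_comm, ← h, ← sub_add_sub_comm] at this

lemma mem_convexHull_sub_mem_lineal (hy : y ∈ convexHull ℝ s) :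
    y ∈ convexHull ℝ {x ∈ s | x - y ∈ (feasibleCone (convexHull ℝ s) y).lineal} := by
  obtain ⟨J, _, p, w, hp, -, hw, hw1, rfl⟩ := eq_pos_convex_span_of_mem_convexHull hy
  set y := ∑ j, w j • p j
  refine (convex_convexHull ℝ _).sum_mem (fun j _ => (hw j).le) hw1 fun j _ =>
    subset_convexHull ℝ _ ⟨hp ⟨j, rfl⟩, ?_⟩
  refine (PointedCone.IsFaceOf.lineal _).mem_of_sum_smul_mem (c := w)
    (fun j => sub_mem_feasibleCone (subset_convexHull ℝ _ (hp ⟨j, rfl⟩))) (fun j => (hw j).le) ?_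
    j (hw j)
  have hsum : ∑ j, w j • (p j - y) = 0 := by
    simp only [smul_sub, sum_sub_distrib, ← sum_smul, hw1, one_smul]
    exact sub_self _
  rw [hsum]
  exact zero_mem _

lemma subset_of_extremePoints_subset [TopologicalSpace E] [T2Space E] [IsTopologicalAddGroup E]
    [ContinuousSMul ℝ E] [LocallyConvexSpace ℝ E] {t : Set E} (hs : IsCompact s)
    (hs' : Convex ℝ s) (ht : IsClosed t) (ht' : Convex ℝ t)
    (h : s.extremePoints ℝ ⊆ t) : s ⊆ t := by
  rw [← closure_convexHull_extremePoints hs hs']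
  exact closure_minimal (convexHull_min h ht') ht

end FeasibleDirections

section Exchange

variable {ι κ : Type*} [DecidableEq ι] [DecidableEq κ]

/-- Closure of a set of assignments under letting `K` machines adopt their configuration from
another assignment of the set, provided they all agree on what they use before and after. -/
def IsExchangeClosed (K : ℕ) (S : Set (ι → κ)) : Prop :=
  ∀ v ∈ S, ∀ v' ∈ S, ∀ U : Finset ι, #U = K → ∀ c c', (∀ i ∈ U, v i = c ∧ v' i = c') →
    U.piecewise v' v ∈ S

lemma assignVec_piecewise_add (U : Finset ι) (v v' : ι → κ) :
    assignVec (U.piecewise v' v) + assignVec (U.piecewise v v') = assignVec v + assignVec v' := by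
  ext ⟨i, c⟩
  by_cases hi : i ∈ U <;> simp [assignVec, hi, add_comm]

variable [Fintype ι]

lemma usage_piecewise_sub (R : Type*) [Ring R] {U : Finset ι} {v v' : ι → κ} {c c' : κ}
    (h : ∀ i ∈ U, v i = c ∧ v' i = c') :
    usage R (U.piecewise v' v) - usage R v = #U • (Pi.single c' 1 - Pi.single c 1) := by
  have hdiff (i : ι) : (Pi.single (U.piecewise v' v i) 1 - Pi.single (v i) 1 : κ → R) =
      if i ∈ U then Pi.single c' 1 - Pi.single c 1 else 0 := by
    by_cases hi : i ∈ U <;> simp [hi, h]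
  simp [usage, ← sum_sub_distrib, hdiff]

lemma hammingDist_piecewise_lt {U : Finset ι} (hU : U.Nonempty) {v v' : ι → κ}
    (h : ∀ i ∈ U, v i ≠ v' i) : hammingDist (U.piecewise v' v) v' < hammingDist v v' := by
  obtain ⟨j, hj⟩ := hU
  refine card_lt_card ((ssubset_iff_of_subset fun i => ?_).2 ⟨j, by simp [h j hj], by simp [hj]⟩)
  by_cases hi : i ∈ U <;> simp [hi]

variable [Fintype κ]

/-- The differences of usage vectors of assignments in `S`, divided by `K`, whose entries are
bounded independently of the number of machines. -/
def exchangeSteps (K : ℕ) (S : Set (ι → κ)) : Set (κ → ℤ) :=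
  {d | (∀ c, |d c| ≤ Fintype.card κ) ∧ ∃ v ∈ S, ∃ v' ∈ S, usage ℤ v' - usage ℤ v = (K : ℤ) • d}

-- Exchanging `K` machines at a time moves `v` towards `v'`, until each pair of distinct
-- configurations is met on fewer than `K` machines and the remaining difference is small.
lemma IsExchangeClosed.exists_mem_span_exchangeSteps {K : ℕ} (hK : 0 < K) {S : Set (ι → κ)}
    (hS : IsExchangeClosed K S) {r : κ → ZMod K} (hr : ∀ v ∈ S, usage (ZMod K) v = r)
    {v v' : ι → κ} (hv : v ∈ S) (hv' : v' ∈ S) :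
    ∃ z ∈ Submodule.span ℤ (exchangeSteps K S), usage ℤ v' - usage ℤ v = (K : ℤ) • z := by
  induction hn : hammingDist v v' using Nat.strong_induction_on generalizing v with
  | _ n ih =>
  subst hn
  by_cases hlarge : ∃ c c', c' ≠ c ∧ K ≤ #{i | v i = c ∧ v' i = c'}
  · obtain ⟨c, c', hne, hle⟩ := hlarge
    obtain ⟨U, hU, hcard⟩ := exists_subset_card_eq hle
    have hUv : ∀ i ∈ U, v i = c ∧ v' i = c' := fun i hi => (mem_filter.1 (hU hi)).2
    have hmem : U.piecewise v' v ∈ S := hS v hv v' hv' U hcard c c' hUv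
    have hstep := usage_piecewise_sub ℤ hUv
    rw [hcard, ← natCast_zsmul] at hstep
    obtain ⟨z, hz, hzv⟩ := ih _ (hammingDist_piecewise_lt (card_pos.1 (hcard ▸ hK))
      fun i hi => by rw [(hUv i hi).1, (hUv i hi).2]; exact hne.symm) hmem rfl
    refine ⟨z + (Pi.single c' 1 - Pi.single c 1), add_mem hz (Submodule.subset_span
      ⟨fun d => ?_, v, hv, _, hmem, hstep⟩), by rw [smul_add, ← hzv, ← hstep, sub_add_sub_cancel]⟩
    have hcardκ : (1 : ℤ) ≤ Fintype.card κ := mod_cast Fintype.card_pos_iff.2 ⟨c⟩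
    refine le_trans ?_ hcardκ
    simp only [Pi.sub_apply, Pi.single_apply]
    split_ifs <;> simp
  · push Not at hlarge
    obtain ⟨d, hd⟩ := exists_usage_sub_eq_smul ((hr v hv).trans (hr v' hv').symm)
    refine ⟨d, Submodule.subset_span ⟨fun c => ?_, v, hv, v', hv', hd⟩, hd⟩
    have hle := abs_usage_sub_le (fun c c' hne => (hlarge c c' hne).le) c
    have hdc : usage ℤ v' c - usage ℤ v c = K * d c := congrFun hd c
    rw [hdc, abs_mul, Nat.abs_cast, mul_comm] at hle
    exact le_of_mul_le_mul_right hle (mod_cast hK)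

end Exchange

section Integrality

variable {ι κ τ : Type*} [Fintype ι] [DecidableEq κ]

/-- The assignments whose usage vector has residue `r` modulo `K`. -/
def residueClass (ι : Type*) {κ : Type*} [Fintype ι] [DecidableEq κ] {K : ℕ} (r : κ → ZMod K) :
    Set (ι → κ) :=
  {v | usage (ZMod K) v = r}

/-- The vertices of the smallest face of the hull of a residue class containing `y`. -/
def faceAssignments {K : ℕ} (r : κ → ZMod K) (y : ι × κ → ℝ) : Set (ι → κ) :=
  {v ∈ residueClass ι r |
    assignVec v - y ∈ (feasibleCone (convexHull ℝ (assignVec '' residueClass ι r)) y).lineal}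

variable {K : ℕ} {r : κ → ZMod K} {y : ι × κ → ℝ}

lemma piecewise_mem_residueClass [DecidableEq ι] {v v' : ι → κ} {U : Finset ι} (hU : #U = K)
    {c c' : κ} (hv : v ∈ residueClass ι r) (h : ∀ i ∈ U, v i = c ∧ v' i = c') :
    U.piecewise v' v ∈ residueClass ι r := by
  have husage := usage_piecewise_sub (ZMod K) h
  rw [hU, ← Nat.cast_smul_eq_nsmul (ZMod K), ZMod.natCast_self, zero_smul, sub_eq_zero] at husage
  exact husage.trans hv

lemma isExchangeClosed_faceAssignments [DecidableEq ι] :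
    IsExchangeClosed K (faceAssignments r y) := by
  intro v hv v' hv' U hU c c' h
  have hw := piecewise_mem_residueClass hU hv.1 h
  have hw' := piecewise_mem_residueClass hU hv'.1 fun i hi => (h i hi).symm
  have hmem {w : ι → κ} (hw : w ∈ residueClass ι r) :=
    subset_convexHull ℝ _ (Set.mem_image_of_mem assignVec hw)
  exact ⟨hw, sub_mem_lineal_of_add_eq_add (hmem hw) (hmem hw') hv.2 hv'.2
    (assignVec_piecewise_add U v v')⟩

lemma mem_convexHull_faceAssignments (hy : y ∈ convexHull ℝ (assignVec '' residueClass ι r)) :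
    y ∈ convexHull ℝ (assignVec '' faceAssignments r y) := by
  refine convexHull_mono ?_ (mem_convexHull_sub_mem_lineal hy)
  rintro _ ⟨⟨v, hv, rfl⟩, hvy⟩
  exact ⟨v, ⟨hv, hvy⟩, rfl⟩

variable [Fintype κ]

lemma span_exchangeSteps_le (hK : 0 < K) :
    Submodule.span ℝ ((algebraMap ℤ ℝ ∘ ·) '' exchangeSteps K (faceAssignments r y)) ≤
      (feasibleCone (convexHull ℝ (assignVec '' residueClass ι r)) y).lineal.map colSum := by
  rw [Submodule.span_le]
  rintro _ ⟨d, ⟨-, v, hv, v', hv', hd⟩, rfl⟩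
  have hdiff : (K : ℝ) • (algebraMap ℤ ℝ ∘ d) = colSum (assignVec v' - assignVec v) := by
    rw [map_sub, colSum_assignVec, colSum_assignVec, ← comp_usage (algebraMap ℤ ℝ),
      ← comp_usage (algebraMap ℤ ℝ)]
    ext c
    simpa using congrArg (Int.cast (R := ℝ)) (congrFun hd c).symm
  rw [SetLike.mem_coe, ← Submodule.smul_mem_iff _ (Nat.cast_ne_zero (R := ℝ).2 hK.ne'), hdiff]
  refine Submodule.mem_map_of_mem ?_
  rw [← sub_sub_sub_cancel_right _ _ y]
  exact sub_mem hv'.2 hv.2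

lemma colSum_sub_usage_mem_span (hK : 0 < K)
    (hy : y ∈ convexHull ℝ (assignVec '' residueClass ι r)) {v : ι → κ}
    (hv : v ∈ faceAssignments r y) :
    colSum y - usage ℝ v ∈
      Submodule.span ℝ ((algebraMap ℤ ℝ ∘ ·) '' exchangeSteps K (faceAssignments r y)) := by
  classical
  set L := Submodule.span ℝ ((algebraMap ℤ ℝ ∘ ·) '' exchangeSteps K (faceAssignments r y))
  have hconv : Convex ℝ {x : ι × κ → ℝ | colSum x - usage ℝ v ∈ L} := by
    simp only [sub_eq_add_neg]
    exact (L.convex.translate_preimage_left (-usage ℝ v)).linear_preimage colSum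
  refine convexHull_min ?_ hconv (mem_convexHull_faceAssignments hy)
  rintro _ ⟨w, hw, rfl⟩
  obtain ⟨z, hz, hzw⟩ := isExchangeClosed_faceAssignments.exists_mem_span_exchangeSteps hK
    (fun _ hu => hu.1) hv hw
  have hcast : colSum (assignVec w) - usage ℝ v = (K : ℝ) • (algebraMap ℤ ℝ ∘ z) := by
    rw [colSum_assignVec, ← comp_usage (algebraMap ℤ ℝ), ← comp_usage (algebraMap ℤ ℝ)]
    ext c
    simpa using congrArg (Int.cast (R := ℝ)) (congrFun hzw c)
  rw [Set.mem_ofPred_eq, hcast]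
  exact L.smul_mem _ (algebraMap_comp_mem_span hz)

/-- The amounts that a fractional assignment supplies when configuration `c` supplies the column
`c` of the matrix `A`. -/
def supply (A : Matrix τ κ ℤ) : (ι × κ → ℝ) →ₗ[ℝ] τ → ℝ :=
  (A.map (algebraMap ℤ ℝ)).mulVecLin ∘ₗ colSum

lemma supply_assignVec (A : Matrix τ κ ℤ) (v : ι → κ) :
    supply A (assignVec v) = algebraMap ℤ ℝ ∘ A.mulVec (usage ℤ v) := by
  rw [← mulVec_algebraMap_comp, comp_usage, ← colSum_assignVec]
  rfl

lemma exists_intCast_eq_colSum (hK0 : 0 < K) {A : Matrix τ κ ℤ}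
    (hK : ∀ G ⊆ A.mulVec '' {d | ∀ c, |d c| ≤ Fintype.card κ}, ClearsDenominators ℝ (K : ℤ) G)
    {v₀ : ι → κ} (hv₀ : v₀ ∈ residueClass ι r)
    (hy : y ∈ (convexHull ℝ (assignVec '' residueClass ι r) ∩
      {x | supply A x = supply A (assignVec v₀)}).extremePoints ℝ) :
    ∃ x : κ → ℤ, algebraMap ℤ ℝ ∘ x = colSum y := by
  obtain ⟨hyF, hyA⟩ := hy.1
  obtain ⟨_, v, hv, -⟩ := convexHull_nonempty_iff.1 ⟨y, mem_convexHull_faceAssignments hyF⟩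
  obtain ⟨d, hd⟩ := exists_usage_sub_eq_smul (hv.1.trans hv₀.symm)
  have hsupply : (A.map (algebraMap ℤ ℝ)).mulVec (colSum y - usage ℝ v) =
      algebraMap ℤ ℝ ∘ ((K : ℤ) • A.mulVec d) := by
    rw [← colSum_assignVec, ← map_sub]
    calc supply A (y - assignVec v) = supply A (assignVec v₀) - supply A (assignVec v) := by
          rw [map_sub, hyA]
      _ = algebraMap ℤ ℝ ∘ (A.mulVec (usage ℤ v₀ - usage ℤ v)) := by
          rw [supply_assignVec, supply_assignVec, Matrix.mulVec_sub]; ext; simp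
      _ = algebraMap ℤ ℝ ∘ ((K : ℤ) • A.mulVec d) := by rw [hd, Matrix.mulVec_smul]
  have hinj : ∀ u ∈ Submodule.span ℝ
        ((algebraMap ℤ ℝ ∘ ·) '' exchangeSteps K (faceAssignments r y)),
      (A.map (algebraMap ℤ ℝ)).mulVec u = 0 → u = 0 := fun u hu hAu => by
    obtain ⟨w, hw, rfl⟩ := span_exchangeSteps_le hK0 hu
    rw [eq_zero_of_mem_lineal_feasibleCone (convex_convexHull ℝ _) hy hw hAu, map_zero]
  obtain ⟨z, -, hz⟩ := exists_algebraMap_comp_eq (Nat.cast_ne_zero.2 hK0.ne')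
    (hK _ (Set.image_mono fun d hd => hd.1)) (colSum_sub_usage_mem_span hK0 hyF hv) hinj hsupply
  refine ⟨z + usage ℤ v, ?_⟩
  rw [← sub_add_cancel (colSum y) (usage ℝ v), ← hz, ← comp_usage (algebraMap ℤ ℝ)]
  ext
  simp

lemma convexHull_residueClass_inter_subset [Finite τ] (hK0 : 0 < K) {A : Matrix τ κ ℤ}
    (hK : ∀ G ⊆ A.mulVec '' {d | ∀ c, |d c| ≤ Fintype.card κ}, ClearsDenominators ℝ (K : ℤ) G)
    {v₀ : ι → κ} (hv₀ : v₀ ∈ residueClass ι r) :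
    convexHull ℝ (assignVec '' residueClass ι r) ∩ {x | supply A x = supply A (assignVec v₀)} ⊆
      convexHull ℝ (assignVec '' {v | A.mulVec (usage ℤ v) = A.mulVec (usage ℤ v₀)}) := by
  have hcompact (F : Set (ι → κ)) : IsCompact (convexHull ℝ (assignVec '' F)) :=
    (F.toFinite.image assignVec).isCompact_convexHull ℝ
  have hclosed : IsClosed {x : ι × κ → ℝ | supply A x = supply A (assignVec v₀)} :=
    isClosed_singleton.preimage (supply A).continuous_of_finiteDimensional
  refine subset_of_extremePoints_subset ((hcompact _).inter_right hclosed)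
    ((convex_convexHull ℝ _).inter ((convex_singleton _).linear_preimage (supply A)))
    (hcompact _).isClosed (convex_convexHull ℝ _) fun y hy => ?_
  obtain ⟨hy0, hrow⟩ := nonneg_and_sum_eq_one_of_mem_convexHull hy.1.1
  obtain ⟨x, hx⟩ := exists_intCast_eq_colSum hK0 hK hv₀ hy
  have hx0 (c : κ) : 0 ≤ x c := by
    have : (0 : ℝ) ≤ x c := by
      rw [show (x c : ℝ) = colSum y c from congrFun hx c, colSum_apply]
      exact sum_nonneg fun i _ => hy0 (i, c)
    exact_mod_cast this
  lift x to κ → ℕ using hx0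
  refine convexHull_mono (Set.image_mono ?_)
    (mem_convexHull_assignVec_of_colSum_eq_natCast hy0 hrow hx.symm)
  rintro v rfl
  have hyv : colSum y = colSum (assignVec v) := by
    rw [← hx, colSum_assignVec]; ext; simp [usage_apply]
  have hsupply : supply A (assignVec v) = supply A (assignVec v₀) :=
    (congrArg (A.map (algebraMap ℤ ℝ)).mulVecLin hyv.symm).trans hy.1.2
  rw [supply_assignVec, supply_assignVec] at hsupply
  exact (FaithfulSMul.algebraMap_injective ℤ ℝ).comp_left hsupply

end Integrality

section PatternProgram

lemma exists_modulus {τ κ : Type*} [Finite τ] [Fintype κ] (A : Matrix τ κ ℤ) :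
    ∃ K : ℕ, 0 < K ∧ ∀ G ⊆ A.mulVec '' {d | ∀ c, |d c| ≤ Fintype.card κ},
      ClearsDenominators ℝ (K : ℤ) G := by
  classical
  have hfin : {d : κ → ℤ | ∀ c, |d c| ≤ Fintype.card κ}.Finite :=
    (Set.finite_Icc (fun _ => -(Fintype.card κ : ℤ)) fun _ => (Fintype.card κ : ℤ)).subset
      fun d hd => ⟨fun c => (abs_le.1 (hd c)).1, fun c => (abs_le.1 (hd c)).2⟩
  obtain ⟨k, hk0, hk⟩ := exists_forall_subset_clearsDenominators ℝ (hfin.image A.mulVec)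
  exact ⟨k.natAbs, Int.natAbs_pos.2 hk0, fun G hG => (hk G hG).of_dvd Int.dvd_natAbs_self⟩

variable {κ : Type} {τ : Type*} [Fintype κ] [DecidableEq κ]

lemma isEF_convexHull_residueClass {K : ℕ} [NeZero K] (m : ℕ) (r : κ → ZMod K) :
    IsEF (convexHull ℝ (assignVec '' residueClass (Fin m) r))
      (m * (Fintype.card (κ → ZMod K) * Fintype.card κ)) :=
  isEF_convexHull_assignVec_sum_eq (fun c => Pi.single c 1) r

lemma convexHull_supply_eq [Finite τ] {K : ℕ} (hK0 : 0 < K) {A : Matrix τ κ ℤ}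
    (hK : ∀ G ⊆ A.mulVec '' {d | ∀ c, |d c| ≤ Fintype.card κ}, ClearsDenominators ℝ (K : ℤ) G)
    (m : ℕ) (b : τ → ℤ) :
    convexHull ℝ (assignVec '' {v : Fin m → κ | A.mulVec (usage ℤ v) = b}) =
      convexHull ℝ (⋃ r : usage (ZMod K) '' {v : Fin m → κ | A.mulVec (usage ℤ v) = b},
        convexHull ℝ (assignVec '' residueClass (Fin m) r.1) ∩
          {x | supply A x = algebraMap ℤ ℝ ∘ b}) := by
  apply Set.Subset.antisymm
  · refine convexHull_mono ?_
    rintro _ ⟨v, hv, rfl⟩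
    exact Set.mem_iUnion.2 ⟨⟨_, v, hv, rfl⟩, subset_convexHull ℝ _ ⟨v, rfl, rfl⟩,
      (supply_assignVec A v).trans (by rw [hv])⟩
  · refine convexHull_min (Set.iUnion_subset ?_) (convex_convexHull ℝ _)
    rintro ⟨_, v, rfl, rfl⟩
    rw [← supply_assignVec]
    exact convexHull_residueClass_inter_subset hK0 hK rfl

lemma exists_isEF_convexHull_mulVec_usage_eq [Finite τ] (A : Matrix τ κ ℤ) :
    ∃ B : ℕ, ∀ (m : ℕ) (b : τ → ℤ), ∃ k ≤ B * (m + 1),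
      IsEF (convexHull ℝ (assignVec '' {v : Fin m → κ | A.mulVec (usage ℤ v) = b})) k := by
  have := Fintype.ofFinite τ
  obtain ⟨K, hK0, hK⟩ := exists_modulus A
  have : NeZero K := ⟨hK0.ne'⟩
  set N := Fintype.card (κ → ZMod K)
  refine ⟨N * (N * Fintype.card κ + 1), fun m b => ?_⟩
  classical
  have hEF := IsEF.convexHull_iUnion
    (fun r : usage (ZMod K) '' {v : Fin m → κ | A.mulVec (usage ℤ v) = b} =>
      (isEF_convexHull_residueClass m r.1).inter_linearEq (supply A) (algebraMap ℤ ℝ ∘ b))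
    (by
      rintro ⟨_, v, rfl, rfl⟩
      exact ⟨_, subset_convexHull ℝ _ ⟨v, rfl, rfl⟩, supply_assignVec A v⟩)
    (fun r => (((Set.toFinite _).isCompact_convexHull ℝ).isBounded).subset Set.inter_subset_left)
  rw [← convexHull_supply_eq hK0 hK] at hEF
  refine ⟨_, ?_, hEF⟩
  rw [sum_const, card_univ, smul_eq_mul, mul_assoc]
  have hcard : Fintype.card (usage (ZMod K) '' {v : Fin m → κ | A.mulVec (usage ℤ v) = b}) ≤ N :=
    Fintype.card_subtype_le _
  calc _ ≤ N * (m * (N * Fintype.card κ) + 1) := by gcongr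
    _ ≤ N * ((N * Fintype.card κ + 1) * (m + 1)) := by
      gcongr
      linarith [Nat.zero_le (N * Fintype.card κ)]

/-- The matrix whose columns are the patterns. -/
def patternMatrix (T : ℕ) : Matrix (Fin T) (Pattern T) ℤ :=
  fun q C => (C.1 q : ℕ)

lemma Ppat_eq_convexHull_assignVec (m T : ℕ) (np : Fin T → ℕ) :
    Ppat m T np = convexHull ℝ (assignVec ''
      {v : Fin m → Pattern T | (patternMatrix T).mulVec (usage ℤ v) = (↑) ∘ np}) := by
  have hsupply (y : Fin m × Pattern T → ℝ) (q : Fin T) : supply (patternMatrix T) y q =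
      ∑ i, ∑ C : Pattern T, ((C.1 q : ℕ) : ℝ) * y (i, C) := by
    rw [sum_comm]
    simp [supply, Matrix.mulVec, dotProduct, patternMatrix, colSum_apply, mul_sum]
  have hdemand (v : Fin m → Pattern T) :
      (∀ q, supply (patternMatrix T) (assignVec v) q = np q) ↔
        (patternMatrix T).mulVec (usage ℤ v) = (↑) ∘ np := by
    simp only [supply_assignVec, funext_iff, Function.comp_apply, eq_intCast]
    norm_cast
  unfold Ppat
  congr 1
  ext y
  simp only [← hsupply]
  constructor
  · rintro ⟨h01, hrow, hy⟩
    obtain ⟨v, rfl⟩ := exists_assignVec_eq h01 hrow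
    exact ⟨v, (hdemand v).1 hy, rfl⟩
  · rintro ⟨v, hv, rfl⟩
    exact ⟨fun q => by simp [assignVec, em'], sum_assignVec v, (hdemand v).2 hv⟩

theorem Ppat_small_xc_general :
    ∃ f : ℕ → ℕ, ∀ (T m : ℕ) (np : Fin T → ℕ), ∃ k ≤ f T * (m + 1), IsEF (Ppat m T np) k := by
  choose f hf using fun T => exists_isEF_convexHull_mulVec_usage_eq (patternMatrix T)
  exact ⟨f, fun T m np => Ppat_eq_convexHull_assignVec m T np ▸ hf T m _⟩

end PatternProgram

/-- The integer hull of the pattern-configuration program has extension complexity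
`O(f(T)·poly(n,m))`. -/
theorem Ppat_small_xc :
    ∃ (f : ℕ → ℕ) (c : ℕ), ∀ (T n m : ℕ) (p : Fin n → ℕ),
      (∀ j, 1 ≤ p j ∧ p j ≤ T) →
      xc (Ppat m T (fun q =>
          (Finset.univ.filter (fun j : Fin n => p j = (q : ℕ) + 1)).card)) ≤
        f T * (n + m + 2) ^ c := by
  obtain ⟨f, hf⟩ := Ppat_small_xc_general
  refine ⟨f, 1, fun T n m p _ => ?_⟩
  obtain ⟨k, hk, hEF⟩ := hf T m _
  refine (Nat.sInf_le hEF).trans (hk.trans ?_)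
  rw [pow_one]
  exact Nat.mul_le_mul_left _ (by omega)
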